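/- Let p be an odd prime and let r be an element of ZMod p with r ≠ 0 and r ≠ 1. Define the sequence c : ℕ → ZMod p by c 1 = 0 and c (ℓ+1) = (ℓ : ZMod p) + (c ℓ - (ℓ : ZMod p)) * r⁻¹ for ℓ ≥ 1. Then c (p-1) = -1 in ZMod p. (This is the key computation showing that the natural sum of all symbols 1,…,p in the loop L_{p,r} equals zero: the partial sum of the first p-1 symbols is -p, and -p + p = 0.) -/

import Mathlib

/-!
The difference `ℓ - c ℓ` starts at `1`, and each step multiplies it by `r⁻¹` and then adds `1`, so
it is the geometric sum `1 + r⁻¹ + ⋯ + r⁻¹ ^ (ℓ - 1)`. In a finite field with `q` elements this sum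
vanishes for `ℓ = q - 1`, because `r⁻¹ ≠ 1` and `r⁻¹ ^ (q - 1) = 1`; hence `c (q - 1) = q - 1 = -1`.
-/

theorem geom_sum_eq_zero_of_pow_eq_one {R : Type*} [Ring R] [NoZeroDivisors R] {a : R} {n : ℕ}
    (ha : a ≠ 1) (han : a ^ n = 1) : ∑ i ∈ Finset.range n, a ^ i = 0 := by
  have hmul : (∑ i ∈ Finset.range n, a ^ i) * (a - 1) = 0 := by
    rw [geom_sum_mul, han, sub_self]
  exact (mul_eq_zero.mp hmul).resolve_right (sub_ne_zero.mpr ha)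

section Recurrence

variable {R : Type*} [Ring R] {a : R} {c : ℕ → R}

theorem eq_natCast_sub_geom_sum_of_rec (hc1 : c 1 = 0)
    (hrec : ∀ ℓ : ℕ, 1 ≤ ℓ → c (ℓ + 1) = (ℓ : R) + (c ℓ - (ℓ : R)) * a) {n : ℕ} (hn : 1 ≤ n) :
    c n = n - ∑ i ∈ Finset.range n, a ^ i := by
  induction n, hn using Nat.le_induction with
  | base => simp [hc1]
  | succ ℓ hℓ ih =>
    have geom_sum_succ_right :
        ∑ i ∈ Finset.range (ℓ + 1), a ^ i = (∑ i ∈ Finset.range ℓ, a ^ i) * a + 1 := by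
      simp only [Finset.sum_range_succ', pow_succ, Finset.sum_mul, pow_zero]
    rw [hrec ℓ hℓ, ih, geom_sum_succ_right]
    push_cast
    noncomm_ring

theorem eq_natCast_of_rec_of_pow_eq_one [NoZeroDivisors R] (hc1 : c 1 = 0)
    (hrec : ∀ ℓ : ℕ, 1 ≤ ℓ → c (ℓ + 1) = (ℓ : R) + (c ℓ - (ℓ : R)) * a) {n : ℕ} (hn : 1 ≤ n)
    (ha : a ≠ 1) (han : a ^ n = 1) : c n = n := by
  rw [eq_natCast_sub_geom_sum_of_rec hc1 hrec hn, geom_sum_eq_zero_of_pow_eq_one ha han, sub_zero]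

end Recurrence

theorem Lpr_partial_sum_penultimate_general {K : Type*} [Field K] [Fintype K]
    {r : K} (hr0 : r ≠ 0) (hr1 : r ≠ 1) {c : ℕ → K} (hc1 : c 1 = 0)
    (hrec : ∀ ℓ : ℕ, 1 ≤ ℓ → c (ℓ + 1) = (ℓ : K) + (c ℓ - (ℓ : K)) * r⁻¹) :
    c (Fintype.card K - 1) = -1 := by
  have hcard : 1 < Fintype.card K := Fintype.one_lt_card
  have hpow : r⁻¹ ^ (Fintype.card K - 1) = 1 :=
    FiniteField.pow_card_sub_one_eq_one r⁻¹ (inv_ne_zero hr0)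
  calc c (Fintype.card K - 1)
    _ = ((Fintype.card K - 1 : ℕ) : K) :=
      eq_natCast_of_rec_of_pow_eq_one hc1 hrec (Nat.le_sub_one_of_lt hcard) (inv_ne_one.mpr hr1)
        hpow
    _ = -1 := by
      rw [Nat.cast_pred (Nat.zero_lt_of_lt hcard), FiniteField.cast_card_eq_zero, zero_sub]

/-- If `c 1 = 0` and `c (ℓ+1) = ℓ + (c ℓ - ℓ) * r⁻¹` for `ℓ ≥ 1`, then
`c (p-1) = -1` in `ZMod p`: the key computation showing that the natural sum of
all symbols `1,…,p` in the loop `L_{p,r}` is zero. -/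
theorem Lpr_partial_sum_penultimate (p : ℕ) (hp : p.Prime) (hodd : p ≠ 2)
    (r : ZMod p) (hr0 : r ≠ 0) (hr1 : r ≠ 1)
    (c : ℕ → ZMod p) (hc1 : c 1 = 0)
    (hrec : ∀ ℓ : ℕ, 1 ≤ ℓ → c (ℓ + 1) = (ℓ : ZMod p) + (c ℓ - (ℓ : ZMod p)) * r⁻¹) :
    c (p - 1) = -1 := by
  have : Fact p.Prime := ⟨hp⟩
  simpa only [ZMod.card] using Lpr_partial_sum_penultimate_general hr0 hr1 hc1 hrec
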